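/- Assume there exists a feasible flow with the same pattern as A'. Consider the exact cyclic coordinate descent sequence for the minimization of θ over (p, μ, a, b) ∈ ℝ^{n+1} × ℝ³: cyclically, each coordinate p_l for l ≤ n is updated to p_l = (1/2)·(log(Σ_{i=1}^n A_{il} e^{p_i} + e^{a + p_{n+1}}) − log(Σ_{j=1}^n A_{lj} e^{−p_j} + e^{−b − p_{n+1}})), the coordinate p_{n+1} is updated to p_{n+1} = (1/2)·(log(Σ_{i=1}^n e^{−b + p_i}) − log(Σ_{j=1}^n e^{a − p_j})), and the multipliers (μ, a, b) are updated to λ(p) (each of these updates is the exact minimization of θ over the corresponding coordinate, the other coordinates being held fixed). Then the sequence of iterates converges at least linearly to a global minimizer of θ. -/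

import Mathlib

open BigOperators Filter

/-- The effective HOTS dual function. -/
noncomputable def effDual {n : ℕ} (A : Matrix (Fin n) (Fin n) ℝ) (α : ℝ)
    (p : Fin (n + 1) → ℝ) (μ a b : ℝ) : ℝ :=
  (∑ i : Fin n, ∑ j : Fin n, A i j * Real.exp (p i.castSucc - p j.castSucc + μ))
    + (∑ i : Fin n, Real.exp (-b - p (Fin.last n) + p i.castSucc + μ))
    + (∑ j : Fin n, Real.exp (a + p (Fin.last n) - p j.castSucc + μ))
    - (1 - α) * a - μ + (1 - α) * b

/-- `σ(p) = Σ_{i,j} A_{ij} e^{p_i − p_j}`. -/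
noncomputable def sigmaP {n : ℕ} (A : Matrix (Fin n) (Fin n) ℝ) (p : Fin (n + 1) → ℝ) : ℝ :=
  ∑ i : Fin n, ∑ j : Fin n, A i j * Real.exp (p i.castSucc - p j.castSucc)

/-- The optimal multipliers `λ(p) = (μ(p), a(p), b(p))`. -/
noncomputable def lamOpt {n : ℕ} (A : Matrix (Fin n) (Fin n) ℝ) (α : ℝ)
    (p : Fin (n + 1) → ℝ) : ℝ × ℝ × ℝ :=
  (Real.log ((2 * α - 1) / sigmaP A p),
   Real.log ((1 - α) / (2 * α - 1) * sigmaP A p /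
     ∑ j : Fin n, Real.exp (p (Fin.last n) - p j.castSucc)),
   -Real.log ((1 - α) / (2 * α - 1) * sigmaP A p /
     ∑ i : Fin n, Real.exp (p i.castSucc - p (Fin.last n))))

/-- The exact single-coordinate update of the coordinate `l` of `p`, the multipliers
`(a, b)` being fixed (for `l ≤ n` it is the HOTS coordinate update, for `l = n+1` it is the
update of the artificial coordinate). -/
noncomputable def coordUpdate {n : ℕ} (A : Matrix (Fin n) (Fin n) ℝ) (a b : ℝ)
    (p : Fin (n + 1) → ℝ) : Fin (n + 1) → ℝ :=
  Fin.lastCases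
    ((1 / 2) * (Real.log (∑ i : Fin n, Real.exp (-b + p i.castSucc))
      - Real.log (∑ j : Fin n, Real.exp (a - p j.castSucc))))
    (fun l => (1 / 2) *
      (Real.log ((∑ i : Fin n, A i l * Real.exp (p i.castSucc))
          + Real.exp (a + p (Fin.last n)))
        - Real.log ((∑ j : Fin n, A l j * Real.exp (-(p j.castSucc)))
          + Real.exp (-b - p (Fin.last n)))))

/-- The augmented `(n+1)×(n+1)` matrix `A'`. -/
def augMatrix {n : ℕ} (A : Matrix (Fin n) (Fin n) ℝ) :
    Matrix (Fin (n + 1)) (Fin (n + 1)) ℝ :=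
  fun i j =>
    if hi : (i : ℕ) < n then
      if hj : (j : ℕ) < n then A ⟨i, hi⟩ ⟨j, hj⟩ else 1
    else
      if (j : ℕ) < n then 1 else 0

/-- A feasible flow with the same pattern as `A'`. -/
def FeasibleFlow {n : ℕ} (A : Matrix (Fin n) (Fin n) ℝ) (α : ℝ)
    (ρ : Matrix (Fin (n + 1)) (Fin (n + 1)) ℝ) : Prop :=
  (∀ i j, 0 < augMatrix A i j → 0 < ρ i j) ∧
  (∀ i j, augMatrix A i j = 0 → ρ i j = 0) ∧
  (∑ i, ∑ j, ρ i j = 1) ∧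
  (∀ i, ∑ j, ρ i j = ∑ j, ρ j i) ∧
  (∑ j : Fin n, ρ (Fin.last n) j.castSucc = 1 - α) ∧
  (∑ i : Fin n, ρ i.castSucc (Fin.last n) = 1 - α)

/-!
The dual function is `f (T x)`, where `T` sends `x = (p, μ, a, b)` to the exponents attached to the
arcs of `A'` and `f t = ∑ (w e * exp (t e) - ρ e * t e)`: pairing the exponents with a feasible flow
`ρ` gives exactly the linear part of the dual. As `ρ > 0` on every arc, `f` is coercive, hence on
the sublevel set of the initial point it is strongly convex with a Lipschitz derivative. Each update
therefore decreases the dual by at least a multiple of the squared step, measured through `T`, and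
leaves on its block a derivative of the order of the step. The blocks span the space and all occur
in a cycle, so the whole derivative, and with it the gap to the minimum, is controlled by the
steps of one cycle: the gap is at most a multiple of its decrease over a cycle. The gaps
therefore decay geometrically, and so do the steps, because `T` is injective on each block.
-/

section LinearConvergence

/-- R-linear convergence of `x` to `a`: the distance to `a` is dominated by a geometric sequence. -/
def ConvergesLinearlyTo {E : Type*} [PseudoMetricSpace E] (x : ℕ → E) (a : E) : Prop :=
  ∃ C ρ : ℝ, 0 ≤ ρ ∧ ρ < 1 ∧ ∀ k, dist (x k) a ≤ C * ρ ^ k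

theorem ConvergesLinearlyTo.tendsto {E : Type*} [PseudoMetricSpace E] {x : ℕ → E} {a : E}
    (h : ConvergesLinearlyTo x a) : Tendsto x atTop (nhds a) := by
  obtain ⟨C, ρ, hρ0, hρ1, hdist⟩ := h
  refine tendsto_iff_dist_tendsto_zero.2 (squeeze_zero (fun _ => dist_nonneg) hdist ?_)
  simpa only [mul_zero] using (tendsto_pow_atTop_nhds_zero_of_lt_one hρ0 hρ1).const_mul C

theorem le_pow_div_mul_of_contraction {g : ℕ → ℝ} (hg : Antitone g) {r : ℝ} (hr : 0 ≤ r)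
    {N : ℕ} (hgN : ∀ k, g (k + N) ≤ r * g k) (k : ℕ) : g k ≤ r ^ (k / N) * g 0 := by
  have multiples (q : ℕ) : g (q * N) ≤ r ^ q * g 0 := by
    induction q with
    | zero => simp
    | succ q ih =>
      calc g ((q + 1) * N) = g (q * N + N) := by rw [add_one_mul]
        _ ≤ r * g (q * N) := hgN _
        _ ≤ r * (r ^ q * g 0) := by gcongr
        _ = r ^ (q + 1) * g 0 := by ring
  exact (hg (Nat.div_mul_le_self k N)).trans (multiples _)

theorem exists_sqrt_le_geometric_of_contraction {g : ℕ → ℝ} (hg : Antitone g) (hg0 : 0 ≤ g 0)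
    {r : ℝ} (hr0 : 0 < r) (hr1 : r < 1) {N : ℕ} (hN : 0 < N)
    (hgN : ∀ k, g (k + N) ≤ r * g k) :
    ∃ C s : ℝ, 0 ≤ s ∧ s < 1 ∧ ∀ k, √(g k) ≤ C * s ^ k := by
  have h2N : 2 * N ≠ 0 := by omega
  set s : ℝ := r ^ ((2 * N : ℕ) : ℝ)⁻¹
  have hs0 : 0 ≤ s := Real.rpow_nonneg hr0.le _
  have hs1 : s < 1 := Real.rpow_lt_one hr0.le hr1 (by positivity)
  have hsr : s ^ (2 * N) = r := Real.rpow_inv_natCast_pow hr0.le h2N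
  refine ⟨√(g 0 / r), s, hs0, hs1, fun k => ?_⟩
  have hexp : k * 2 ≤ 2 * N * (k / N + 1) := by
    have := Nat.lt_mul_div_succ k hN
    linarith
  calc √(g k) ≤ √(g 0 / r * (s ^ k) ^ 2) := Real.sqrt_le_sqrt <| by
        calc g k ≤ r ^ (k / N) * g 0 := le_pow_div_mul_of_contraction hg hr0.le hgN k
          _ = g 0 / r * s ^ (2 * N * (k / N + 1)) := by rw [pow_mul, hsr]; field_simp; ring
          _ ≤ g 0 / r * (s ^ k) ^ 2 := by
            rw [← pow_mul]
            exact mul_le_mul_of_nonneg_left (pow_le_pow_of_le_one hs0 hs1.le hexp) (by positivity)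
    _ = √(g 0 / r) * s ^ k := by
      rw [Real.sqrt_mul (by positivity), Real.sqrt_sq (by positivity)]

theorem exists_contraction_of_gap_le {E : Type*} {θ : E → ℝ} {x : ℕ → E} {K : ℝ} {N : ℕ}
    (hK : 0 ≤ K) (hanti : Antitone fun k => θ (x k))
    (hgap : ∀ k y, θ (x k) - θ y ≤ K * (θ (x k) - θ (x (k + N)))) :
    ∃ I r : ℝ, 0 < r ∧ r < 1 ∧ (∀ y, I ≤ θ y) ∧
      ∀ k, θ (x (k + N)) - I ≤ r * (θ (x k) - I) := by
  have : Nonempty E := ⟨x 0⟩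
  have hbdd : BddBelow (Set.range θ) :=
    ⟨θ (x 0) - K * (θ (x 0) - θ (x (0 + N))), Set.forall_mem_range.2 fun y => by
      linarith [hgap 0 y]⟩
  refine ⟨⨅ y, θ y, (K + 1) / (K + 2), by positivity, by rw [div_lt_one] <;> linarith,
    fun y => ciInf_le hbdd y, fun k => ?_⟩
  have hinf : θ (x k) - K * (θ (x k) - θ (x (k + N))) ≤ ⨅ y, θ y :=
    le_ciInf fun y => by linarith [hgap k y]
  have hdecr : θ (x (k + N)) ≤ θ (x k) := hanti (Nat.le_add_right k N)
  rw [div_mul_eq_mul_div, le_div_iff₀ (by positivity)]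
  linarith

variable {E : Type*} [PseudoMetricSpace E] {θ : E → ℝ} {x : ℕ → E} {K : ℝ} {N : ℕ}

theorem isMinimizer_of_tendsto_of_gap_le (hθ : Continuous θ) {a : E}
    (ha : Tendsto x atTop (nhds a))
    (hgap : ∀ k y, θ (x k) - θ y ≤ K * (θ (x k) - θ (x (k + N)))) (y : E) : θ a ≤ θ y := by
  have hlim : Tendsto (fun k => θ (x k)) atTop (nhds (θ a)) := (hθ.tendsto a).comp ha
  have hdecr : Tendsto (fun k => K * (θ (x k) - θ (x (k + N)))) atTop (nhds 0) := by
    simpa only [sub_self, mul_zero] using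
      (hlim.sub ((tendsto_add_atTop_iff_nat N).2 hlim)).const_mul K
  exact sub_nonpos.1 (le_of_tendsto_of_tendsto' (hlim.sub_const _) hdecr fun k => hgap k y)

theorem exists_minimizer_convergesLinearlyTo_of_gap_le [CompleteSpace E] (hθ : Continuous θ)
    {κ : ℝ} (hκ : 0 < κ) (hK : 0 ≤ K) (hN : 0 < N)
    (hdecr : ∀ k, κ * dist (x k) (x (k + 1)) ^ 2 ≤ θ (x k) - θ (x (k + 1)))
    (hgap : ∀ k y, θ (x k) - θ y ≤ K * (θ (x k) - θ (x (k + N)))) :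
    ∃ a, (∀ y, θ a ≤ θ y) ∧ ConvergesLinearlyTo x a := by
  have hanti : Antitone fun k => θ (x k) := antitone_nat_of_succ_le fun k =>
    sub_nonneg.1 ((by positivity : 0 ≤ κ * dist (x k) (x (k + 1)) ^ 2).trans (hdecr k))
  obtain ⟨I, r, hr0, hr1, hI, hcontr⟩ := exists_contraction_of_gap_le hK hanti hgap
  obtain ⟨C, s, hs0, hs1, hC⟩ := exists_sqrt_le_geometric_of_contraction
    (fun _ _ hkl => sub_le_sub_right (hanti hkl) I) (sub_nonneg.2 (hI _)) hr0 hr1 hN hcontr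
  have hstep (k : ℕ) : dist (x k) (x (k + 1)) ≤ C / √κ * s ^ k := by
    calc dist (x k) (x (k + 1)) ≤ √((θ (x k) - I) / κ) := by
          refine Real.le_sqrt_of_sq_le ?_
          rw [le_div_iff₀' hκ]
          linarith [hdecr k, hI (x (k + 1))]
      _ = √(θ (x k) - I) / √κ := Real.sqrt_div' _ hκ.le
      _ ≤ C * s ^ k / √κ := by gcongr; exact hC k
      _ = C / √κ * s ^ k := by ring
  obtain ⟨a, ha⟩ := cauchySeq_tendsto_of_complete (cauchySeq_of_le_geometric s _ hs1 hstep)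
  refine ⟨a, isMinimizer_of_tendsto_of_gap_le hθ ha hgap,
    C / √κ / (1 - s), s, hs0, hs1, fun k => ?_⟩
  rw [div_mul_eq_mul_div]
  exact dist_le_of_le_geometric_of_tendsto s _ hs1 hstep ha k

end LinearConvergence

section FiniteDimensional

variable {E F β : Type*} [NormedAddCommGroup E] [NormedSpace ℝ E] [FiniteDimensional ℝ E]
  [NormedAddCommGroup F] [NormedSpace ℝ F]

theorem exists_bounded_decomposition [Fintype β] (U : β → Submodule ℝ E) :
    ∃ D : ℝ, ∀ v ∈ ⨆ b, U b, ∃ g : β → E,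
      (∀ b, g b ∈ U b) ∧ ∑ b, g b = v ∧ ∀ b, ‖g b‖ ≤ D * ‖v‖ := by
  classical
  let Φ : (∀ b, U b) →ₗ[ℝ] E := ∑ b, (U b).subtype ∘ₗ LinearMap.proj b
  have hΦ (g : ∀ b, U b) : Φ g = ∑ b, (g b : E) := by simp [Φ]
  obtain ⟨D, -, hD⟩ := (Φ.rangeRestrict.toContinuousLinearMap).exists_preimage_norm_le
    Φ.surjective_rangeRestrict
  refine ⟨D, fun v hv => ?_⟩
  obtain ⟨f, hfU, hfv⟩ := (Submodule.mem_iSup_iff_exists_finsupp U v).1 hv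
  have hvΦ : v ∈ Φ.range := ⟨fun b => ⟨f b, hfU b⟩, by
    rw [hΦ, ← hfv, f.sum_fintype _ fun _ => rfl]⟩
  obtain ⟨g, hgv, hgD⟩ := hD ⟨v, hvΦ⟩
  exact ⟨fun b => g b, fun b => (g b).2, (hΦ g).symm.trans (congrArg Subtype.val hgv),
    fun b => (norm_le_pi_norm g b).trans hgD⟩

theorem exists_forall_abs_apply_le_of_mem_iSup [Finite β] (U : β → Submodule ℝ E) :
    ∃ D : ℝ, ∀ (φ : E →L[ℝ] ℝ) (M : ℝ), 0 ≤ M → (∀ b, ∀ h ∈ U b, |φ h| ≤ M * ‖h‖) →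
      ∀ h ∈ ⨆ b, U b, |φ h| ≤ D * M * ‖h‖ := by
  cases nonempty_fintype β
  obtain ⟨D, hD⟩ := exists_bounded_decomposition U
  refine ⟨Fintype.card β * D, fun φ M hM hφ h hh => ?_⟩
  obtain ⟨g, hgU, rfl, hgD⟩ := hD h hh
  calc |φ (∑ b, g b)| ≤ ∑ b, |φ (g b)| := by
        rw [map_sum]; exact Finset.abs_sum_le_sum_abs _ _
    _ ≤ ∑ _b : β, M * (D * ‖∑ b, g b‖) := Finset.sum_le_sum fun b _ =>
        (hφ b _ (hgU b)).trans (mul_le_mul_of_nonneg_left (hgD b) hM)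
    _ = Fintype.card β * D * M * ‖∑ b, g b‖ := by
        rw [Finset.sum_const, Finset.card_univ, nsmul_eq_mul]; ring

theorem exists_norm_le_mul_norm_map_of_disjoint_ker [Finite β] (T : E →ₗ[ℝ] F)
    (V : β → Submodule ℝ E) (hV : ∀ b, Disjoint (V b) T.ker) :
    ∃ c : ℝ, 0 < c ∧ ∀ b, ∀ h ∈ V b, ‖h‖ ≤ c * ‖T h‖ := by
  cases nonempty_fintype β
  have hker (b : β) : (T.domRestrict (V b)).ker = ⊥ := by
    rw [LinearMap.ker_domRestrict, ← Submodule.disjoint_iff_comap_eq_bot]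
    exact hV b
  choose K _ hK using fun b => (T.domRestrict (V b)).exists_antilipschitzWith (hker b)
  refine ⟨∑ b, (K b : ℝ) + 1, by positivity, fun b h hh => ?_⟩
  have hKb : ‖h‖ ≤ K b * ‖T h‖ := by
    simpa using (hK b).le_mul_dist (⟨h, hh⟩ : V b) 0
  have hle : (K b : ℝ) ≤ ∑ b, (K b : ℝ) + 1 :=
    (Finset.single_le_sum (fun b _ => (K b).coe_nonneg) (Finset.mem_univ b)).trans (by simp)
  exact hKb.trans (by gcongr)

end FiniteDimensional

section PathLength

/-- The length of the polygonal path `t k, t (k + 1), …, t (k + N)`. -/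
def pathLength {F : Type*} [PseudoMetricSpace F] (t : ℕ → F) (k N : ℕ) : ℝ :=
  ∑ j ∈ Finset.range N, dist (t (k + j)) (t (k + j + 1))

variable {F : Type*} [PseudoMetricSpace F] (t : ℕ → F) (k : ℕ) {N j : ℕ}

theorem pathLength_nonneg : 0 ≤ pathLength t k N :=
  Finset.sum_nonneg fun _ _ => dist_nonneg

theorem dist_succ_le_pathLength (hj : j < N) :
    dist (t (k + j)) (t (k + j + 1)) ≤ pathLength t k N :=
  Finset.single_le_sum (f := fun j => dist (t (k + j)) (t (k + j + 1)))
    (fun _ _ => dist_nonneg) (Finset.mem_range.2 hj)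

theorem dist_le_pathLength (hj : j ≤ N) : dist (t k) (t (k + j)) ≤ pathLength t k N :=
  (dist_le_range_sum_dist (fun i => t (k + i)) j).trans <|
    Finset.sum_le_sum_of_subset_of_nonneg (Finset.range_mono hj) fun _ _ _ => dist_nonneg

theorem mul_sq_pathLength_le {t : ℕ → F} {φ : ℕ → ℝ} {κ : ℝ} (hκ : 0 ≤ κ)
    (hφ : ∀ k, κ * dist (t k) (t (k + 1)) ^ 2 ≤ φ k - φ (k + 1)) :
    κ * pathLength t k N ^ 2 ≤ N * (φ k - φ (k + N)) := by
  have hcs := sq_sum_le_card_mul_sum_sq (s := Finset.range N)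
    (f := fun j => dist (t (k + j)) (t (k + j + 1)))
  rw [Finset.card_range] at hcs
  calc κ * pathLength t k N ^ 2
      ≤ κ * (N * ∑ j ∈ Finset.range N, dist (t (k + j)) (t (k + j + 1)) ^ 2) :=
        mul_le_mul_of_nonneg_left hcs hκ
    _ = N * ∑ j ∈ Finset.range N, κ * dist (t (k + j)) (t (k + j + 1)) ^ 2 := by
        rw [← Finset.mul_sum]; ring
    _ ≤ N * ∑ j ∈ Finset.range N, (φ (k + j) - φ (k + (j + 1))) := by
        gcongr with j; exact hφ (k + j)
    _ = N * (φ k - φ (k + N)) := by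
        rw [Finset.sum_range_sub' fun j => φ (k + j), add_zero]

end PathLength

section BlockDescent

variable {E F β : Type*} [NormedAddCommGroup E] [NormedSpace ℝ E]
  [NormedAddCommGroup F] [NormedSpace ℝ F] {f : F → ℝ} {f' : F → F →L[ℝ] ℝ}

/-- Strong convexity of modulus `κ` and `Λ`-smoothness of `f` on `S`, in first-order form.
The field `f'` plays the role of the derivative of `f`, but only these inequalities are used. -/
structure StronglyConvexSmoothOn (f : F → ℝ) (f' : F → F →L[ℝ] ℝ) (κ : ℝ) (Λ : NNReal)
    (S : Set F) : Prop where
  tangent_le : ∀ u ∈ S, ∀ v ∈ S, f u + f' u (v - u) + κ * ‖v - u‖ ^ 2 ≤ f v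
  lipschitz : LipschitzOnWith Λ f' S

namespace StronglyConvexSmoothOn

variable {κ : ℝ} {Λ : NNReal} {S : Set F}

theorem sub_le_sq_div (hf : StronglyConvexSmoothOn f f' κ Λ S) (hκ : 0 < κ) {u v : F}
    (hu : u ∈ S) (hv : v ∈ S) {G : ℝ} (hG : |f' u (v - u)| ≤ G * ‖v - u‖) :
    f u - f v ≤ G ^ 2 / (4 * κ) := by
  rw [le_div_iff₀ (by positivity)]
  nlinarith [hf.tangent_le u hu v hv, neg_abs_le (f' u (v - u)),
    sq_nonneg (G - 2 * κ * ‖v - u‖)]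

theorem mul_dist_sq_le_sub (hf : StronglyConvexSmoothOn f f' κ Λ S) {u v : F}
    (hu : u ∈ S) (hv : v ∈ S) (huv : f' v (v - u) ≤ 0) : κ * dist u v ^ 2 ≤ f u - f v := by
  have htangent := hf.tangent_le v hv u hu
  rw [← neg_sub v u, map_neg, norm_neg, ← dist_eq_norm, dist_comm] at htangent
  linarith

theorem abs_apply_le_mul_pathLength (hf : StronglyConvexSmoothOn f f' κ Λ S) {t : ℕ → F}
    (ht : ∀ k, t k ∈ S) {k j N : ℕ} (hj : j < N) {C : NNReal} {h : F}
    (hC : |f' (t (k + j + 1)) h| ≤ C * dist (t (k + j)) (t (k + j + 1)) * ‖h‖) :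
    |f' (t k) h| ≤ (Λ + C : NNReal) * pathLength t k N * ‖h‖ := by
  have hdrift : |f' (t k) h - f' (t (k + j + 1)) h| ≤ Λ * pathLength t k N * ‖h‖ :=
    calc |f' (t k) h - f' (t (k + j + 1)) h| ≤ ‖f' (t k) - f' (t (k + j + 1))‖ * ‖h‖ :=
          (f' (t k) - f' (t (k + j + 1))).le_opNorm h
      _ ≤ Λ * dist (t k) (t (k + (j + 1))) * ‖h‖ := by
          gcongr
          rw [← dist_eq_norm]
          exact hf.lipschitz.dist_le_mul _ (ht _) _ (ht _)
      _ ≤ Λ * pathLength t k N * ‖h‖ := by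
          gcongr
          exact dist_le_pathLength t k hj
  have hend : |f' (t (k + j + 1)) h| ≤ C * pathLength t k N * ‖h‖ := hC.trans (by
    gcongr
    exact dist_succ_le_pathLength t k hj)
  calc |f' (t k) h| ≤ |f' (t k) h - f' (t (k + j + 1)) h| + |f' (t (k + j + 1)) h| := by
        simpa only [sub_add_cancel] using
          abs_add_le (f' (t k) h - f' (t (k + j + 1)) h) (f' (t (k + j + 1)) h)
    _ ≤ Λ * pathLength t k N * ‖h‖ + C * pathLength t k N * ‖h‖ := add_le_add hdrift hend
    _ = (Λ + C : NNReal) * pathLength t k N * ‖h‖ := by push_cast; ring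

theorem sub_le_mul_sub_of_abs_apply_le (hf : StronglyConvexSmoothOn f f' κ Λ S) (hκ : 0 < κ)
    {t : ℕ → F} (ht : ∀ k, t k ∈ S) {v : F} (hv : v ∈ S)
    (hdecr : ∀ k, κ * dist (t k) (t (k + 1)) ^ 2 ≤ f (t k) - f (t (k + 1))) {k N : ℕ} {M : ℝ}
    (hM : |f' (t k) (v - t k)| ≤ M * pathLength t k N * ‖v - t k‖) :
    f (t k) - f v ≤ M ^ 2 * N / (4 * κ ^ 2) * (f (t k) - f (t (k + N))) :=
  calc f (t k) - f v ≤ (M * pathLength t k N) ^ 2 / (4 * κ) := hf.sub_le_sq_div hκ (ht k) hv hM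
    _ = M ^ 2 / (4 * κ ^ 2) * (κ * pathLength t k N ^ 2) := by field_simp
    _ ≤ M ^ 2 / (4 * κ ^ 2) * (N * (f (t k) - f (t (k + N)))) :=
        mul_le_mul_of_nonneg_left
          (mul_sq_pathLength_le k (φ := fun k => f (t k)) hκ.le hdecr) (by positivity)
    _ = M ^ 2 * N / (4 * κ ^ 2) * (f (t k) - f (t (k + N))) := by ring

end StronglyConvexSmoothOn

/-- A run of block descent for `f ∘ T`: step `k` moves inside the block `V (s k)`, does not
overshoot the minimum along its own direction, and leaves on this block a derivative of the order
of the step, locally uniformly. Exact block minimization is the case where that derivative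
vanishes. -/
structure IsBlockDescent (f' : F → F →L[ℝ] ℝ) (T : E →ₗ[ℝ] F) (V : β → Submodule ℝ E)
    (s : ℕ → β) (x : ℕ → E) : Prop where
  sub_mem : ∀ k, x (k + 1) - x k ∈ V (s k)
  apply_step_nonpos : ∀ k, f' (T (x (k + 1))) (T (x (k + 1)) - T (x k)) ≤ 0
  exists_abs_apply_le : ∀ R : ℝ, ∃ C : NNReal, ∀ k, ‖T (x k)‖ ≤ R → ‖T (x (k + 1))‖ ≤ R →
    ∀ h ∈ V (s k),
      |f' (T (x (k + 1))) (T h)| ≤ C * dist (T (x k)) (T (x (k + 1))) * ‖T h‖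

namespace IsBlockDescent

variable {T : E →ₗ[ℝ] F} {V : β → Submodule ℝ E} {s : ℕ → β} {x : ℕ → E} {N : ℕ} {κ : ℝ}
  {Λ : NNReal}

theorem antitone (hx : IsBlockDescent f' T V s x)
    (hf : ∀ R, ∃ κ > 0, ∃ Λ, StronglyConvexSmoothOn f f' κ Λ (Metric.closedBall 0 R)) :
    Antitone fun k => f (T (x k)) := antitone_nat_of_succ_le fun k => by
  obtain ⟨κ, hκ, Λ, hbounds⟩ := hf (max ‖T (x k)‖ ‖T (x (k + 1))‖)
  refine sub_nonneg.1 (le_trans (by positivity) (hbounds.mul_dist_sq_le_sub ?_ ?_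
    (hx.apply_step_nonpos k))) <;> simp

theorem exists_abs_apply_le_mul_pathLength [FiniteDimensional ℝ F] [Finite β]
    (hx : IsBlockDescent f' T V s x) (hV : ⨆ b, V b = ⊤) (hs : ∀ k b, ∃ j < N, s (k + j) = b)
    {R : ℝ} (hf : StronglyConvexSmoothOn f f' κ Λ (Metric.closedBall 0 R))
    (hR : ∀ k, ‖T (x k)‖ ≤ R) :
    ∃ M : ℝ, ∀ k h, |f' (T (x k)) (T h)| ≤ M * pathLength (T ∘ x) k N * ‖T h‖ := by
  obtain ⟨C, hC⟩ := hx.exists_abs_apply_le R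
  obtain ⟨D, hD⟩ := exists_forall_abs_apply_le_of_mem_iSup fun b => (V b).map T
  refine ⟨D * (Λ + C : NNReal), fun k h => ?_⟩
  have hblock (b : β) : ∀ u ∈ (V b).map T,
      |f' (T (x k)) u| ≤ (Λ + C : NNReal) * pathLength (T ∘ x) k N * ‖u‖ := by
    rintro _ ⟨h, hh, rfl⟩
    obtain ⟨j, hj, rfl⟩ := hs k b
    exact hf.abs_apply_le_mul_pathLength (t := T ∘ x) (fun k => by simpa using hR k) hj
      (hC (k + j) (hR _) (hR _) h hh)
  have hmem : T h ∈ ⨆ b, (V b).map T := by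
    rw [← Submodule.map_iSup, hV]
    exact Submodule.mem_map_of_mem Submodule.mem_top
  have hsum := hD (f' (T (x k))) _ (by positivity [pathLength_nonneg (T ∘ x) k (N := N)])
    hblock _ hmem
  rwa [← mul_assoc] at hsum

theorem exists_minimizer_convergesLinearlyTo [FiniteDimensional ℝ E] [FiniteDimensional ℝ F]
    [Finite β] (hx : IsBlockDescent f' T V s x) (hV : ⨆ b, V b = ⊤)
    (hker : ∀ b, Disjoint (V b) T.ker) (hs : ∀ k b, ∃ j < N, s (k + j) = b)
    (hcont : Continuous f) (hcoer : ∀ c, ∃ R, ∀ u, f u ≤ c → ‖u‖ ≤ R)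
    (hf : ∀ R, ∃ κ > 0, ∃ Λ, StronglyConvexSmoothOn f f' κ Λ (Metric.closedBall 0 R)) :
    ∃ a, (∀ y, f (T a) ≤ f (T y)) ∧ ConvergesLinearlyTo x a := by
  have hanti : Antitone fun k => f (T (x k)) := hx.antitone hf
  obtain ⟨R, hR⟩ := hcoer (f (T (x 0)))
  have hball (k : ℕ) : ‖T (x k)‖ ≤ R := hR _ (hanti k.zero_le)
  obtain ⟨κ, hκ, Λ, hbounds⟩ := hf R
  obtain ⟨c, hc, hle⟩ := exists_norm_le_mul_norm_map_of_disjoint_ker T V hker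
  obtain ⟨M, hM⟩ := hx.exists_abs_apply_le_mul_pathLength hV hs hbounds hball
  have hdecr (k : ℕ) : κ * dist (T (x k)) (T (x (k + 1))) ^ 2 ≤ f (T (x k)) - f (T (x (k + 1))) :=
    hbounds.mul_dist_sq_le_sub (by simpa using hball k) (by simpa using hball (k + 1))
      (hx.apply_step_nonpos k)
  have hstep (k : ℕ) : dist (x k) (x (k + 1)) ≤ c * dist (T (x k)) (T (x (k + 1))) := by
    simpa only [dist_comm (x k), dist_comm (T (x k)), dist_eq_norm, map_sub] using
      hle _ _ (hx.sub_mem k)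
  have hgap (k : ℕ) (y : E) (hy : ‖T y‖ ≤ R) :
      f (T (x k)) - f (T y) ≤ M ^ 2 * N / (4 * κ ^ 2) * (f (T (x k)) - f (T (x (k + N)))) :=
    hbounds.sub_le_mul_sub_of_abs_apply_le hκ (t := T ∘ x) (fun k => by simpa using hball k)
      (by simpa using hy) hdecr (by simpa only [map_sub, Function.comp_apply] using hM k (y - x k))
  obtain ⟨j, hj, -⟩ := hs 0 (s 0)
  refine exists_minimizer_convergesLinearlyTo_of_gap_le (θ := fun y => f (T y)) (N := N)
    (hcont.comp T.continuous_of_finiteDimensional) (κ := κ / c ^ 2)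
    (K := M ^ 2 * N / (4 * κ ^ 2)) (by positivity) (by positivity) (by omega)
    (fun k => ?_) fun k y => ?_
  · calc κ / c ^ 2 * dist (x k) (x (k + 1)) ^ 2
        ≤ κ / c ^ 2 * (c * dist (T (x k)) (T (x (k + 1)))) ^ 2 := by gcongr; exact hstep k
      _ = κ * dist (T (x k)) (T (x (k + 1))) ^ 2 := by field_simp
      _ ≤ _ := hdecr k
  · by_cases hy : f (T y) ≤ f (T (x 0))
    · exact hgap k y (hR _ hy)
    · have hneg : f (T (x k)) - f (T y) ≤ 0 := by linarith [hanti k.zero_le]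
      exact hneg.trans (mul_nonneg (by positivity) (sub_nonneg.2 (hanti (Nat.le_add_right k N))))

end IsBlockDescent

end BlockDescent

section ExponentialGap

theorem abs_mul_exp_neg_abs_le_abs_exp_sub_one (v : ℝ) :
    |v| * Real.exp (-|v|) ≤ |Real.exp v - 1| := by
  rcases le_total 0 v with hv | hv
  · rw [abs_of_nonneg hv, abs_of_nonneg (sub_nonneg.2 (Real.one_le_exp hv))]
    have := Real.add_one_le_exp v
    have := mul_le_of_le_one_right hv (Real.exp_le_one_iff.2 (neg_nonpos.2 hv))
    linarith
  · rw [abs_of_nonpos hv, neg_neg, abs_of_nonpos (sub_nonpos.2 (Real.exp_le_one_iff.2 hv))]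
    have hmul : Real.exp v * (-v + 1) ≤ 1 := by
      simpa only [← Real.exp_add, add_neg_cancel, Real.exp_zero] using
        mul_le_mul_of_nonneg_left (Real.add_one_le_exp (-v)) (Real.exp_nonneg v)
    linarith

theorem sq_div_four_mul_exp_neg_abs_le (u : ℝ) :
    u ^ 2 / 4 * Real.exp (-|u|) ≤ Real.exp u - 1 - u := by
  have hhalf : |u / 2| = |u| / 2 := by rw [abs_div, abs_two]
  calc u ^ 2 / 4 * Real.exp (-|u|) = (|u / 2| * Real.exp (-|u / 2|)) ^ 2 := by
        rw [mul_pow, sq_abs, ← Real.exp_nat_mul, hhalf]; push_cast; ring_nf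
    _ ≤ |Real.exp (u / 2) - 1| ^ 2 := by
        gcongr; exact abs_mul_exp_neg_abs_le_abs_exp_sub_one _
    _ = Real.exp u + 1 - 2 * Real.exp (u / 2) := by
        rw [sq_abs, sub_sq, ← Real.exp_nat_mul]; push_cast; ring_nf
    _ ≤ Real.exp u - 1 - u := by linarith [Real.add_one_le_exp (u / 2)]

theorem abs_exp_sub_exp_le {R s t : ℝ} (hs : s ≤ R) (ht : t ≤ R) :
    |Real.exp s - Real.exp t| ≤ Real.exp R * |s - t| := by
  have hderiv (u : ℝ) (hu : u ∈ Set.Iic R) : ‖Real.exp u‖ ≤ Real.exp R := by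
    rw [Real.norm_of_nonneg (Real.exp_nonneg u)]
    exact Real.exp_le_exp.2 hu
  exact (convex_Iic R).norm_image_sub_le_of_norm_hasDerivWithin_le
    (fun u _ => (Real.hasDerivAt_exp u).hasDerivWithinAt) hderiv ht hs

theorem exp_add_strong_tangent_le {R s t : ℝ} (hs : |s| ≤ R) (ht : |t| ≤ R) :
    Real.exp s + Real.exp s * (t - s) + Real.exp (-(3 * R)) / 4 * (t - s) ^ 2 ≤ Real.exp t := by
  have hquad := sq_div_four_mul_exp_neg_abs_le (t - s)
  have hdist : |t - s| ≤ 2 * R := (abs_sub t s).trans (by linarith)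
  have hexp : Real.exp (-(3 * R)) ≤ Real.exp s * Real.exp (-|t - s|) := by
    rw [← Real.exp_add]
    exact Real.exp_le_exp.2 (by linarith [(abs_le.1 hs).1])
  have hst : Real.exp t = Real.exp s * Real.exp (t - s) := by
    rw [← Real.exp_add, add_sub_cancel]
  calc Real.exp s + Real.exp s * (t - s) + Real.exp (-(3 * R)) / 4 * (t - s) ^ 2
      ≤ Real.exp s + Real.exp s * (t - s)
        + Real.exp s * Real.exp (-|t - s|) / 4 * (t - s) ^ 2 := by gcongr
    _ = Real.exp s * (1 + (t - s) + (t - s) ^ 2 / 4 * Real.exp (-|t - s|)) := by ring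
    _ ≤ Real.exp s * Real.exp (t - s) := by gcongr; linarith
    _ = Real.exp t := hst.symm

theorem mul_abs_sub_le_mul_exp_sub_mul {w ρ : ℝ} (hw : 0 < w) (hρ : 0 < ρ) (t : ℝ) :
    ρ * |t| - 2 * ρ ^ 2 / w ≤ w * Real.exp t - ρ * t := by
  rcases le_total t 0 with ht | ht
  · rw [abs_of_nonpos ht]
    have : 0 ≤ 2 * ρ ^ 2 / w := by positivity
    have : 0 ≤ w * Real.exp t := by positivity
    linarith
  · rw [abs_of_nonneg ht]
    have hquad : w * (t ^ 2 / 2) ≤ w * Real.exp t := by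
      gcongr
      linarith [Real.quadratic_le_exp_of_nonneg ht]
    have hsq : w / 2 * (t - 2 * ρ / w) ^ 2 = w * (t ^ 2 / 2) - 2 * ρ * t + 2 * ρ ^ 2 / w := by
      field_simp
      ring
    have : 0 ≤ w / 2 * (t - 2 * ρ / w) ^ 2 := by positivity
    linarith

variable {ι : Type*} [Fintype ι] {w ρ : ι → ℝ}

theorem pi_norm_sq_le_sum_sq (h : ι → ℝ) : ‖h‖ ^ 2 ≤ ∑ e, h e ^ 2 := by
  have hnonneg : 0 ≤ ∑ e, h e ^ 2 := Finset.sum_nonneg fun e _ => sq_nonneg (h e)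
  refine (Real.le_sqrt (norm_nonneg h) hnonneg).1 ?_
  refine (pi_norm_le_iff_of_nonneg (Real.sqrt_nonneg _)).2 fun e => Real.abs_le_sqrt ?_
  exact Finset.single_le_sum (f := fun e => h e ^ 2) (fun e _ => sq_nonneg (h e))
    (Finset.mem_univ e)

/-- The separable potential whose gradient compares the flow `w e * exp (t e)` carried by the arc
`e` at tension `t e` with the reference flow `ρ e`. -/
noncomputable def expGap (w ρ t : ι → ℝ) : ℝ :=
  ∑ e, (w e * Real.exp (t e) - ρ e * t e)

/-- The derivative of `expGap w ρ`. -/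
noncomputable def expGapDeriv (w ρ t : ι → ℝ) : (ι → ℝ) →L[ℝ] ℝ :=
  ∑ e, (w e * Real.exp (t e) - ρ e) • ContinuousLinearMap.proj e

theorem expGapDeriv_apply (w ρ t h : ι → ℝ) :
    expGapDeriv w ρ t h = ∑ e, (w e * Real.exp (t e) - ρ e) * h e := by
  simp [expGapDeriv]

theorem continuous_expGap (w ρ : ι → ℝ) : Continuous (expGap w ρ) := by
  unfold expGap
  fun_prop

theorem expGap_coercive (hw : ∀ e, 0 < w e) (hρ : ∀ e, 0 < ρ e) (c : ℝ) :
    ∃ R, ∀ t, expGap w ρ t ≤ c → ‖t‖ ≤ R := by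
  obtain ⟨m, hm, hmρ⟩ := Pi.exists_forall_pos_add_lt hρ
  refine ⟨|c + ∑ e, 2 * ρ e ^ 2 / w e| / m, fun t ht => ?_⟩
  refine (pi_norm_le_iff_of_nonneg (by positivity)).2 fun e => ?_
  have hle : m ≤ ρ e := by simpa using (hmρ e).le
  rw [le_div_iff₀' hm]
  calc m * |t e| ≤ ρ e * |t e| := by gcongr
    _ ≤ ∑ e, ρ e * |t e| := Finset.single_le_sum (f := fun e => ρ e * |t e|)
        (fun e _ => mul_nonneg (hρ e).le (abs_nonneg _)) (Finset.mem_univ e)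
    _ = ∑ e, (ρ e * |t e| - 2 * ρ e ^ 2 / w e) + ∑ e, 2 * ρ e ^ 2 / w e := by
        rw [Finset.sum_sub_distrib, sub_add_cancel]
    _ ≤ expGap w ρ t + ∑ e, 2 * ρ e ^ 2 / w e := by
        gcongr with e
        exact Finset.sum_le_sum fun e _ => mul_abs_sub_le_mul_exp_sub_mul (hw e) (hρ e) (t e)
    _ ≤ |c + ∑ e, 2 * ρ e ^ 2 / w e| := (add_le_add_left ht _).trans (le_abs_self _)

theorem expGap_strong_tangent_le (ρ : ι → ℝ) {m : ℝ} (hm : 0 ≤ m) (hmw : ∀ e, m ≤ w e) {R : ℝ}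
    {u v : ι → ℝ} (hu : ‖u‖ ≤ R) (hv : ‖v‖ ≤ R) :
    expGap w ρ u + expGapDeriv w ρ u (v - u) + m * (Real.exp (-(3 * R)) / 4) * ‖v - u‖ ^ 2 ≤
      expGap w ρ v := by
  set q := Real.exp (-(3 * R)) / 4
  have : 0 ≤ q := by positivity
  have harc (e : ι) : (w e * Real.exp (u e) - ρ e * u e)
      + (w e * Real.exp (u e) - ρ e) * (v e - u e) + m * q * (v e - u e) ^ 2 ≤
      w e * Real.exp (v e) - ρ e * v e := by
    have htangent : w e * (Real.exp (u e) + Real.exp (u e) * (v e - u e) + q * (v e - u e) ^ 2) ≤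
        w e * Real.exp (v e) := mul_le_mul_of_nonneg_left
      (exp_add_strong_tangent_le ((norm_le_pi_norm u e).trans hu) ((norm_le_pi_norm v e).trans hv))
      (hm.trans (hmw e))
    have hmod : m * (q * (v e - u e) ^ 2) ≤ w e * (q * (v e - u e) ^ 2) :=
      mul_le_mul_of_nonneg_right (hmw e) (by positivity)
    linarith
  calc expGap w ρ u + expGapDeriv w ρ u (v - u) + m * q * ‖v - u‖ ^ 2
      ≤ expGap w ρ u + expGapDeriv w ρ u (v - u) + m * q * ∑ e, (v - u) e ^ 2 := by
        gcongr
        exact pi_norm_sq_le_sum_sq _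
    _ = ∑ e, ((w e * Real.exp (u e) - ρ e * u e)
          + (w e * Real.exp (u e) - ρ e) * (v e - u e) + m * q * (v e - u e) ^ 2) := by
        simp only [expGap, expGapDeriv_apply, Pi.sub_apply, Finset.mul_sum,
          Finset.sum_add_distrib]
    _ ≤ expGap w ρ v := Finset.sum_le_sum fun e _ => harc e

theorem norm_expGapDeriv_sub_le (hw : ∀ e, 0 ≤ w e) {R : ℝ} {u v : ι → ℝ} (hu : ‖u‖ ≤ R)
    (hv : ‖v‖ ≤ R) :
    ‖expGapDeriv w ρ u - expGapDeriv w ρ v‖ ≤ (∑ e, w e) * Real.exp R * ‖u - v‖ := by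
  have hnonneg : 0 ≤ ∑ e, w e := Finset.sum_nonneg fun e _ => hw e
  refine ContinuousLinearMap.opNorm_le_bound _ (by positivity) fun h => ?_
  have harc (e : ι) : |w e * (Real.exp (u e) - Real.exp (v e)) * h e| ≤
      w e * (Real.exp R * ‖u - v‖) * ‖h‖ := by
    rw [abs_mul, abs_mul, abs_of_nonneg (hw e)]
    have hexp : |Real.exp (u e) - Real.exp (v e)| ≤ Real.exp R * ‖u - v‖ :=
      (abs_exp_sub_exp_le ((le_abs_self _).trans ((norm_le_pi_norm u e).trans hu))
        ((le_abs_self _).trans ((norm_le_pi_norm v e).trans hv))).trans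
        (mul_le_mul_of_nonneg_left (norm_le_pi_norm (u - v) e) (Real.exp_nonneg R))
    exact mul_le_mul (mul_le_mul_of_nonneg_left hexp (hw e)) (norm_le_pi_norm h e)
      (abs_nonneg _) (mul_nonneg (hw e) (by positivity))
  calc |(expGapDeriv w ρ u - expGapDeriv w ρ v) h|
      = |∑ e, w e * (Real.exp (u e) - Real.exp (v e)) * h e| := by
        rw [sub_apply, expGapDeriv_apply, expGapDeriv_apply,
          ← Finset.sum_sub_distrib]
        congr! 2 with e
        ring
    _ ≤ ∑ e, w e * (Real.exp R * ‖u - v‖) * ‖h‖ :=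
        (Finset.abs_sum_le_sum_abs _ _).trans (Finset.sum_le_sum fun e _ => harc e)
    _ = (∑ e, w e) * Real.exp R * ‖u - v‖ * ‖h‖ := by
        rw [← Finset.sum_mul, ← Finset.sum_mul, ← mul_assoc]

theorem exists_stronglyConvexSmoothOn_expGap (hw : ∀ e, 0 < w e) (ρ : ι → ℝ) (R : ℝ) :
    ∃ κ > 0, ∃ Λ, StronglyConvexSmoothOn (expGap w ρ) (expGapDeriv w ρ) κ Λ
      (Metric.closedBall 0 R) := by
  obtain ⟨m, hm, hmw⟩ := Pi.exists_forall_pos_add_lt hw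
  have hle (e : ι) : m ≤ w e := by simpa using (hmw e).le
  have hΛ : 0 ≤ (∑ e, w e) * Real.exp R :=
    mul_nonneg (Finset.sum_nonneg fun e _ => (hw e).le) (Real.exp_nonneg R)
  refine ⟨m * (Real.exp (-(3 * R)) / 4), by positivity, ⟨_, hΛ⟩, fun u hu v hv => ?_, ?_⟩
  · exact expGap_strong_tangent_le ρ hm.le hle (mem_closedBall_zero_iff.1 hu)
      (mem_closedBall_zero_iff.1 hv)
  · refine LipschitzOnWith.of_dist_le_mul fun u hu v hv => ?_
    rw [dist_eq_norm, dist_eq_norm]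
    exact norm_expGapDeriv_sub_le (fun e => (hw e).le) (mem_closedBall_zero_iff.1 hu)
      (mem_closedBall_zero_iff.1 hv)

end ExponentialGap

section Hots

variable {n : ℕ} {A : Matrix (Fin n) (Fin n) ℝ}

@[simp]
theorem augMatrix_castSucc_castSucc (A : Matrix (Fin n) (Fin n) ℝ) (i j : Fin n) :
    augMatrix A i.castSucc j.castSucc = A i j := by
  simp [augMatrix]

@[simp]
theorem augMatrix_castSucc_last (A : Matrix (Fin n) (Fin n) ℝ) (i : Fin n) :
    augMatrix A i.castSucc (Fin.last n) = 1 := by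
  simp [augMatrix]

@[simp]
theorem augMatrix_last_castSucc (A : Matrix (Fin n) (Fin n) ℝ) (j : Fin n) :
    augMatrix A (Fin.last n) j.castSucc = 1 := by
  simp [augMatrix]

@[simp]
theorem augMatrix_last_last (A : Matrix (Fin n) (Fin n) ℝ) :
    augMatrix A (Fin.last n) (Fin.last n) = 0 := by
  simp [augMatrix]

theorem augMatrix_nonneg (hA : ∀ i j, 0 ≤ A i j) (i j : Fin (n + 1)) : 0 ≤ augMatrix A i j := by
  induction i using Fin.lastCases <;> induction j using Fin.lastCases <;> simp [hA]

/-- The space of the variables `(p, (μ, a, b))` of the dual function. -/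
abbrev HotsSpace (n : ℕ) : Type := (Fin (n + 1) → ℝ) × ℝ × ℝ × ℝ

/-- The arcs of the augmented network: the pairs of indices where `A'` is positive. -/
abbrev Arc (A : Matrix (Fin n) (Fin n) ℝ) : Type :=
  {e : Fin (n + 1) × Fin (n + 1) // 0 < augMatrix A e.1 e.2}

/-- The exponent attached by the dual function to the pair `(i, j)`. -/
noncomputable def tension (x : HotsSpace n) (i j : Fin (n + 1)) : ℝ :=
  x.1 i - x.1 j + x.2.1 + (if i = Fin.last n then x.2.2.1 else 0)
    - (if j = Fin.last n then x.2.2.2 else 0)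

theorem tension_add (x y : HotsSpace n) (i j : Fin (n + 1)) :
    tension (x + y) i j = tension x i j + tension y i j := by
  simp only [tension, Prod.fst_add, Prod.snd_add, Pi.add_apply]
  split_ifs <;> ring

theorem tension_smul (c : ℝ) (x : HotsSpace n) (i j : Fin (n + 1)) :
    tension (c • x) i j = c * tension x i j := by
  simp only [tension, Prod.smul_fst, Prod.smul_snd, Pi.smul_apply, smul_eq_mul]
  split_ifs <;> ring

theorem tension_single (l : Fin (n + 1)) (δ : ℝ) (i j : Fin (n + 1)) :
    tension (Pi.single l δ, 0) i j =
      (Pi.single l δ : Fin (n + 1) → ℝ) i - (Pi.single l δ : Fin (n + 1) → ℝ) j := by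
  simp [tension]

/-- The tensions of `x` on the arcs of the augmented network. -/
noncomputable def arcTension (A : Matrix (Fin n) (Fin n) ℝ) :
    HotsSpace n →ₗ[ℝ] (Arc A → ℝ) where
  toFun x e := tension x e.1.1 e.1.2
  map_add' x y := funext fun e => tension_add x y e.1.1 e.1.2
  map_smul' c x := funext fun e => tension_smul c x e.1.1 e.1.2

/-- The flow through the pair `(i, j)` induced by the variables `x`. -/
noncomputable def hotsFlow (A : Matrix (Fin n) (Fin n) ℝ) (x : HotsSpace n) :
    Matrix (Fin (n + 1)) (Fin (n + 1)) ℝ :=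
  fun i j => augMatrix A i j * Real.exp (tension x i j)

section HotsFlow

variable (A) (x : HotsSpace n)

@[simp]
theorem hotsFlow_castSucc_castSucc (i j : Fin n) :
    hotsFlow A x i.castSucc j.castSucc =
      A i j * Real.exp (x.1 i.castSucc - x.1 j.castSucc + x.2.1) := by
  simp [hotsFlow, tension, Fin.castSucc_ne_last]

@[simp]
theorem hotsFlow_castSucc_last (i : Fin n) :
    hotsFlow A x i.castSucc (Fin.last n) =
      Real.exp (-x.2.2.2 - x.1 (Fin.last n) + x.1 i.castSucc + x.2.1) := by
  simp only [hotsFlow, tension, augMatrix_castSucc_last, Fin.castSucc_ne_last, if_true, if_false]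
  ring_nf

@[simp]
theorem hotsFlow_last_castSucc (j : Fin n) :
    hotsFlow A x (Fin.last n) j.castSucc =
      Real.exp (x.2.2.1 + x.1 (Fin.last n) - x.1 j.castSucc + x.2.1) := by
  simp only [hotsFlow, tension, augMatrix_last_castSucc, Fin.castSucc_ne_last, if_true, if_false]
  ring_nf

@[simp]
theorem hotsFlow_last_last : hotsFlow A x (Fin.last n) (Fin.last n) = 0 := by
  simp [hotsFlow]

end HotsFlow

theorem sum_arc_eq (hA : ∀ i j, 0 ≤ A i j) {g : Fin (n + 1) → Fin (n + 1) → ℝ}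
    (hg : ∀ i j, augMatrix A i j = 0 → g i j = 0) :
    ∑ e : Arc A, g e.1.1 e.1.2 = ∑ i, ∑ j, g i j := by
  rw [← Fintype.sum_prod_type']
  refine Fintype.sum_of_injective Subtype.val Subtype.val_injective _ _ (fun e he => hg _ _ ?_)
    fun _ => rfl
  rw [Subtype.range_coe_subtype, Set.mem_ofPred_eq, not_lt] at he
  exact he.antisymm (augMatrix_nonneg hA _ _)

theorem sum_flow_mul_tension (f : Matrix (Fin (n + 1)) (Fin (n + 1)) ℝ) (h : HotsSpace n) :
    ∑ i, ∑ j, f i j * tension h i j =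
      ∑ l, (∑ j, f l j - ∑ i, f i l) * h.1 l + (∑ i, ∑ j, f i j) * h.2.1
        + (∑ j, f (Fin.last n) j) * h.2.2.1 - (∑ i, f i (Fin.last n)) * h.2.2.2 := by
  have hin : ∑ i, ∑ j, f i j * h.1 j = ∑ l, (∑ i, f i l) * h.1 l := by
    rw [Finset.sum_comm]
    simp only [Finset.sum_mul]
  have hlast_in : ∑ i, ∑ j, f i j * (if j = Fin.last n then h.2.2.2 else 0) =
      (∑ i, f i (Fin.last n)) * h.2.2.2 := by
    simp [Finset.sum_mul]
  simp only [tension, mul_add, mul_sub, Finset.sum_add_distrib, Finset.sum_sub_distrib, hin,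
    hlast_in, sub_mul, ← Finset.sum_mul]
  simp only [mul_ite, mul_zero, Finset.sum_ite_eq', Finset.mem_univ, if_true]

/-- The capacities `A'` of the arcs. -/
def arcWeight (A : Matrix (Fin n) (Fin n) ℝ) (e : Arc A) : ℝ := augMatrix A e.1.1 e.1.2

/-- The restriction of a flow to the arcs. -/
def arcFlow (A : Matrix (Fin n) (Fin n) ℝ) (ρ : Matrix (Fin (n + 1)) (Fin (n + 1)) ℝ)
    (e : Arc A) : ℝ := ρ e.1.1 e.1.2

section Feasible

variable {α : ℝ} {ρ : Matrix (Fin (n + 1)) (Fin (n + 1)) ℝ}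

theorem FeasibleFlow.sum_last_left (hρ : FeasibleFlow A α ρ) :
    ∑ j, ρ (Fin.last n) j = 1 - α := by
  obtain ⟨-, hzero, -, -, hout, -⟩ := hρ
  rw [Fin.sum_univ_castSucc, hout, hzero _ _ (augMatrix_last_last A), add_zero]

theorem FeasibleFlow.sum_last_right (hρ : FeasibleFlow A α ρ) :
    ∑ i, ρ i (Fin.last n) = 1 - α := by
  obtain ⟨-, hzero, -, -, -, hin⟩ := hρ
  rw [Fin.sum_univ_castSucc, hin, hzero _ _ (augMatrix_last_last A), add_zero]

theorem FeasibleFlow.sum_mul_tension (hρ : FeasibleFlow A α ρ) (h : HotsSpace n) :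
    ∑ i, ∑ j, ρ i j * tension h i j = h.2.1 + (1 - α) * h.2.2.1 - (1 - α) * h.2.2.2 := by
  rw [sum_flow_mul_tension, hρ.sum_last_left, hρ.sum_last_right]
  obtain ⟨-, -, htotal, hcons, -, -⟩ := hρ
  simp only [htotal, fun l => sub_eq_zero.2 (hcons l), zero_mul, Finset.sum_const_zero, one_mul,
    zero_add]

theorem FeasibleFlow.effDual_eq_expGap (hA : ∀ i j, 0 ≤ A i j) (hρ : FeasibleFlow A α ρ)
    (x : HotsSpace n) :
    effDual A α x.1 x.2.1 x.2.2.1 x.2.2.2 =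
      expGap (arcWeight A) (arcFlow A ρ) (arcTension A x) := by
  have hsum : expGap (arcWeight A) (arcFlow A ρ) (arcTension A x) =
      ∑ i, ∑ j, (hotsFlow A x i j - ρ i j * tension x i j) :=
    sum_arc_eq (g := fun i j => hotsFlow A x i j - ρ i j * tension x i j) hA
      fun i j hij => by simp [hotsFlow, hij, hρ.2.1 i j hij]
  have hflow : ∑ i, ∑ j, hotsFlow A x i j =
      (∑ i : Fin n, ∑ j : Fin n, A i j * Real.exp (x.1 i.castSucc - x.1 j.castSucc + x.2.1))
        + (∑ i : Fin n, Real.exp (-x.2.2.2 - x.1 (Fin.last n) + x.1 i.castSucc + x.2.1))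
        + ∑ j : Fin n, Real.exp (x.2.2.1 + x.1 (Fin.last n) - x.1 j.castSucc + x.2.1) := by
    simp only [Fin.sum_univ_castSucc, hotsFlow_castSucc_castSucc, hotsFlow_castSucc_last,
      hotsFlow_last_castSucc, hotsFlow_last_last, Finset.sum_add_distrib, add_zero]
    ring
  rw [hsum]
  simp only [Finset.sum_sub_distrib, hρ.sum_mul_tension, hflow, effDual]
  ring

theorem FeasibleFlow.expGapDeriv_eq (hA : ∀ i j, 0 ≤ A i j) (hρ : FeasibleFlow A α ρ)
    (x h : HotsSpace n) :
    expGapDeriv (arcWeight A) (arcFlow A ρ) (arcTension A x) (arcTension A h) =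
      ∑ l, (∑ j, hotsFlow A x l j - ∑ i, hotsFlow A x i l) * h.1 l
        + (∑ i, ∑ j, hotsFlow A x i j - 1) * h.2.1
        + (∑ j, hotsFlow A x (Fin.last n) j - (1 - α)) * h.2.2.1
        - (∑ i, hotsFlow A x i (Fin.last n) - (1 - α)) * h.2.2.2 := by
  have hsum : expGapDeriv (arcWeight A) (arcFlow A ρ) (arcTension A x) (arcTension A h) =
      ∑ i, ∑ j, (hotsFlow A x i j - ρ i j) * tension h i j := by
    rw [expGapDeriv_apply]
    exact sum_arc_eq (g := fun i j => (hotsFlow A x i j - ρ i j) * tension h i j) hA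
      fun i j hij => by simp [hotsFlow, hij, hρ.2.1 i j hij]
  simp only [hsum, sub_mul, Finset.sum_sub_distrib, hρ.sum_mul_tension, sum_flow_mul_tension]
  ring

end Feasible

end Hots

section CoordinateUpdate

variable {n : ℕ} {A : Matrix (Fin n) (Fin n) ℝ}

theorem hotsFlow_nonneg (hA : ∀ i j, 0 ≤ A i j) (x : HotsSpace n) (i j : Fin (n + 1)) :
    0 ≤ hotsFlow A x i j :=
  mul_nonneg (augMatrix_nonneg hA i j) (Real.exp_nonneg _)

theorem hotsFlow_le (hA : ∀ i j, 0 ≤ A i j) (x : HotsSpace n) (i j : Fin (n + 1)) :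
    hotsFlow A x i j ≤ augMatrix A i j * Real.exp ‖arcTension A x‖ := by
  rcases (augMatrix_nonneg hA i j).eq_or_lt with hij | hij
  · simp [hotsFlow, ← hij]
  · unfold hotsFlow
    gcongr
    exact (le_abs_self _).trans (norm_le_pi_norm (arcTension A x) ⟨(i, j), hij⟩)

theorem hotsFlow_add (x h : HotsSpace n) (i j : Fin (n + 1)) :
    hotsFlow A (x + h) i j = hotsFlow A x i j * Real.exp (tension h i j) := by
  rw [hotsFlow, hotsFlow, mul_assoc, ← Real.exp_add, tension_add]

theorem sum_hotsFlow_add_single_left (x : HotsSpace n) (l : Fin (n + 1)) (δ : ℝ) :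
    ∑ j, hotsFlow A (x + (Pi.single l δ, 0)) l j =
      (∑ j, hotsFlow A x l j - hotsFlow A x l l) * Real.exp δ + hotsFlow A x l l := by
  rw [Fintype.sum_eq_add_sum_compl l, Fintype.sum_eq_add_sum_compl l, add_sub_cancel_left,
    hotsFlow_add, tension_single, sub_self, Real.exp_zero, mul_one, add_comm, Finset.sum_mul]
  congr 1
  refine Finset.sum_congr rfl fun j hj => ?_
  have hjl : j ≠ l := by simpa using hj
  rw [hotsFlow_add, tension_single, Pi.single_eq_same, Pi.single_eq_of_ne hjl, sub_zero]

theorem sum_hotsFlow_add_single_right (x : HotsSpace n) (l : Fin (n + 1)) (δ : ℝ) :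
    ∑ i, hotsFlow A (x + (Pi.single l δ, 0)) i l =
      (∑ i, hotsFlow A x i l - hotsFlow A x l l) * Real.exp (-δ) + hotsFlow A x l l := by
  rw [Fintype.sum_eq_add_sum_compl l, Fintype.sum_eq_add_sum_compl l, add_sub_cancel_left,
    hotsFlow_add, tension_single, sub_self, Real.exp_zero, mul_one, add_comm, Finset.sum_mul]
  congr 1
  refine Finset.sum_congr rfl fun i hi => ?_
  have hil : i ≠ l := by simpa using hi
  rw [hotsFlow_add, tension_single, Pi.single_eq_same, Pi.single_eq_of_ne hil, zero_sub]

theorem sum_hotsFlow_left_pos (hA : ∀ i j, 0 ≤ A i j) (hn : 0 < n) (x : HotsSpace n)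
    (l : Fin (n + 1)) : 0 < ∑ j, hotsFlow A x l j := by
  refine Finset.sum_pos' (fun j _ => hotsFlow_nonneg hA x l j) ?_
  induction l using Fin.lastCases with
  | last => exact ⟨Fin.castSucc ⟨0, hn⟩, Finset.mem_univ _, by
      simpa only [hotsFlow_last_castSucc] using Real.exp_pos _⟩
  | cast i => exact ⟨Fin.last n, Finset.mem_univ _, by simp [Real.exp_pos]⟩

theorem sum_hotsFlow_right_pos (hA : ∀ i j, 0 ≤ A i j) (hn : 0 < n) (x : HotsSpace n)
    (l : Fin (n + 1)) : 0 < ∑ i, hotsFlow A x i l := by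
  refine Finset.sum_pos' (fun i _ => hotsFlow_nonneg hA x i l) ?_
  induction l using Fin.lastCases with
  | last => exact ⟨Fin.castSucc ⟨0, hn⟩, Finset.mem_univ _, by
      simpa only [hotsFlow_castSucc_last] using Real.exp_pos _⟩
  | cast i => exact ⟨Fin.last n, Finset.mem_univ _, by simp [Real.exp_pos]⟩

theorem coordUpdate_eq_log_sub_log (A : Matrix (Fin n) (Fin n) ℝ) (x : HotsSpace n)
    (l : Fin (n + 1)) :
    coordUpdate A x.2.2.1 x.2.2.2 x.1 l =
      1 / 2 * (Real.log ((∑ i, hotsFlow A x i l) * Real.exp (x.1 l - x.2.1))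
        - Real.log ((∑ j, hotsFlow A x l j) * Real.exp (-x.1 l - x.2.1))) := by
  induction l using Fin.lastCases with
  | last =>
    simp only [coordUpdate, Fin.lastCases_last, Fin.sum_univ_castSucc, hotsFlow_castSucc_last,
      hotsFlow_last_castSucc, hotsFlow_last_last, add_zero, Finset.sum_mul, ← Real.exp_add]
    ring_nf
  | cast l =>
    simp only [coordUpdate, Fin.lastCases_castSucc, Fin.sum_univ_castSucc,
      hotsFlow_castSucc_castSucc, hotsFlow_castSucc_last, hotsFlow_last_castSucc, add_mul,
      Finset.sum_mul, mul_assoc, ← Real.exp_add]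
    ring_nf

theorem coordUpdate_eq (hA : ∀ i j, 0 ≤ A i j) (hn : 0 < n) (x : HotsSpace n)
    (l : Fin (n + 1)) :
    coordUpdate A x.2.2.1 x.2.2.2 x.1 l = x.1 l +
      (Real.log (∑ i, hotsFlow A x i l) - Real.log (∑ j, hotsFlow A x l j)) / 2 := by
  rw [coordUpdate_eq_log_sub_log,
    Real.log_mul (sum_hotsFlow_right_pos hA hn x l).ne' (Real.exp_ne_zero _),
    Real.log_mul (sum_hotsFlow_left_pos hA hn x l).ne' (Real.exp_ne_zero _),
    Real.log_exp, Real.log_exp]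
  ring

/-- The increment of the coordinate `l` of `p` in its update. -/
noncomputable def coordIncrement (A : Matrix (Fin n) (Fin n) ℝ) (x : HotsSpace n)
    (l : Fin (n + 1)) : ℝ :=
  coordUpdate A x.2.2.1 x.2.2.2 x.1 l - x.1 l

theorem sum_hotsFlow_mul_exp_coordIncrement (hA : ∀ i j, 0 ≤ A i j) (hn : 0 < n)
    (x : HotsSpace n) (l : Fin (n + 1)) :
    (∑ j, hotsFlow A x l j) * Real.exp (coordIncrement A x l) =
      (∑ i, hotsFlow A x i l) * Real.exp (-coordIncrement A x l) := by
  have hout := sum_hotsFlow_left_pos hA hn x l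
  have hin := sum_hotsFlow_right_pos hA hn x l
  rw [coordIncrement, coordUpdate_eq hA hn, add_sub_cancel_left, ← Real.exp_log hout,
    ← Real.exp_log hin, ← Real.exp_add, ← Real.exp_add, Real.log_exp, Real.log_exp]
  congr 1
  ring

-- The self-loop `A l l` appears in both sums of the update although it does not depend on `p l`;
-- it damps the step, so that the new point is balanced at `l` only up to the self-loop.
theorem sum_hotsFlow_sub_sum_hotsFlow_coordIncrement (hA : ∀ i j, 0 ≤ A i j) (hn : 0 < n)
    (x : HotsSpace n) (l : Fin (n + 1)) :
    ∑ j, hotsFlow A (x + (Pi.single l (coordIncrement A x l), 0)) l j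
        - ∑ i, hotsFlow A (x + (Pi.single l (coordIncrement A x l), 0)) i l =
      -(hotsFlow A x l l *
        (Real.exp (coordIncrement A x l) - Real.exp (-coordIncrement A x l))) := by
  rw [sum_hotsFlow_add_single_left, sum_hotsFlow_add_single_right]
  linarith [sum_hotsFlow_mul_exp_coordIncrement hA hn x l]

end CoordinateUpdate

section Blocks

variable {n : ℕ} {A : Matrix (Fin n) (Fin n) ℝ}

/-- The blocks of the cyclic descent: `some l` is the line of the coordinate `l` of `p`, and
`none` is the space of the multipliers `(μ, a, b)`. -/
def hotsBlock (n : ℕ) : Option (Fin (n + 1)) → Submodule ℝ (HotsSpace n)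
  | some l => (LinearMap.single ℝ (fun _ => ℝ) l).range.map (LinearMap.inl ℝ _ _)
  | none => (LinearMap.inr ℝ _ _).range

theorem mem_hotsBlock_some {l : Fin (n + 1)} {h : HotsSpace n} :
    h ∈ hotsBlock n (some l) ↔ ∃ δ : ℝ, h = (Pi.single l δ, 0) := by
  simp [hotsBlock, Prod.ext_iff, eq_comm]

theorem mem_hotsBlock_none {h : HotsSpace n} : h ∈ hotsBlock n none ↔ h.1 = 0 := by
  simp [hotsBlock, LinearMap.range_inr]

theorem iSup_hotsBlock (n : ℕ) : ⨆ b, hotsBlock n b = ⊤ := by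
  have hsome : ⨆ l, hotsBlock n (some l) =
      (LinearMap.inl ℝ (Fin (n + 1) → ℝ) (ℝ × ℝ × ℝ)).range := by
    simp only [hotsBlock]
    rw [← Submodule.map_iSup, LinearMap.iSup_range_single, Submodule.map_top]
  rw [iSup_option, hsome, sup_comm]
  exact LinearMap.sup_range_inl_inr

/-- The block updated at step `k` of the cyclic descent. -/
def cyclicBlock (n k : ℕ) : Option (Fin (n + 1)) :=
  finSuccEquivLast (Fin.ofNat (n + 2) k)

theorem cyclicBlock_eq_some {k : ℕ} (h : k % (n + 2) < n + 1) :
    cyclicBlock n k = some ⟨k % (n + 2), h⟩ :=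
  finSuccEquivLast_castSucc ⟨k % (n + 2), h⟩

theorem cyclicBlock_eq_none {k : ℕ} (h : k % (n + 2) = n + 1) : cyclicBlock n k = none := by
  have hlast : Fin.ofNat (n + 2) k = Fin.last (n + 1) := Fin.ext h
  rw [cyclicBlock, hlast, finSuccEquivLast_last]

theorem exists_lt_cyclicBlock_add_eq (k : ℕ) (b : Option (Fin (n + 1))) :
    ∃ j < n + 2, cyclicBlock n (k + j) = b := by
  obtain ⟨c, rfl⟩ := finSuccEquivLast.surjective b
  obtain ⟨j, hj, hmod⟩ := Int.existsUnique_equiv_nat ((c : ℕ) - (k : ℕ) : ℤ)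
    (b := ((n + 2 : ℕ) : ℤ)) (by positivity)
  refine ⟨j, by exact_mod_cast hj, congrArg finSuccEquivLast (Fin.ext ?_)⟩
  have hcongr : k + j ≡ c [MOD n + 2] := by
    rw [← Int.natCast_modEq_iff]
    simpa using hmod.add_left (k : ℤ)
  exact Eq.trans hcongr (Nat.mod_eq_of_lt c.2)

theorem abs_le_norm_arcTension_single (A : Matrix (Fin n) (Fin n) ℝ) (hn : 0 < n)
    (l : Fin (n + 1)) (δ : ℝ) : |δ| ≤ ‖arcTension A (Pi.single l δ, 0)‖ := by
  suffices harc : ∃ i, i ≠ l ∧ 0 < augMatrix A l i by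
    obtain ⟨i, hil, hpos⟩ := harc
    have hle := norm_le_pi_norm (arcTension A (Pi.single l δ, 0)) ⟨(l, i), hpos⟩
    rw [Real.norm_eq_abs] at hle
    simpa [arcTension, tension_single, hil] using hle
  induction l using Fin.lastCases with
  | last => exact ⟨Fin.castSucc ⟨0, hn⟩, Fin.castSucc_ne_last _, by
      simp only [augMatrix_last_castSucc, zero_lt_one]⟩
  | cast l => exact ⟨Fin.last n, (Fin.castSucc_ne_last l).symm, by simp⟩

theorem exists_entry_pos (hA : ∀ i j, 0 ≤ A i j) (hA0 : A ≠ 0) : ∃ i j, 0 < A i j := by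
  by_contra! hnonpos
  exact hA0 (Matrix.ext fun i j => (hnonpos i j).antisymm (hA i j))

theorem disjoint_hotsBlock_ker_arcTension (hA : ∀ i j, 0 ≤ A i j) (hA0 : A ≠ 0)
    (b : Option (Fin (n + 1))) : Disjoint (hotsBlock n b) (arcTension A).ker := by
  obtain ⟨i, j, hij⟩ := exists_entry_pos hA hA0
  refine Submodule.disjoint_def.2 fun h hb hker => ?_
  cases b with
  | some l =>
    obtain ⟨δ, rfl⟩ := mem_hotsBlock_some.1 hb
    have hδ := abs_le_norm_arcTension_single A i.pos l δ
    rw [LinearMap.mem_ker.1 hker, norm_zero, abs_nonpos_iff] at hδ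
    rw [hδ, Pi.single_zero]
    rfl
  | none =>
    have hp : h.1 = 0 := mem_hotsBlock_none.1 hb
    have htension {u v : Fin (n + 1)} (huv : 0 < augMatrix A u v) : tension h u v = 0 :=
      congrFun (LinearMap.mem_ker.1 hker) ⟨(u, v), huv⟩
    have hμ := htension (u := i.castSucc) (v := j.castSucc)
      (by rwa [augMatrix_castSucc_castSucc])
    have hb := htension (u := i.castSucc) (v := Fin.last n) (by simp)
    have ha := htension (u := Fin.last n) (v := j.castSucc) (by simp)
    simp only [tension, hp, Pi.zero_apply, Fin.castSucc_ne_last, if_true, if_false] at hμ hb ha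
    refine Prod.ext hp (Prod.ext ?_ (Prod.ext ?_ ?_)) <;>
      simp only [Prod.fst_zero, Prod.snd_zero] <;> linarith

end Blocks

section Steps

variable {n : ℕ} {A : Matrix (Fin n) (Fin n) ℝ} {α : ℝ}
  {ρ : Matrix (Fin (n + 1)) (Fin (n + 1)) ℝ}

theorem FeasibleFlow.expGapDeriv_single_coordIncrement (hρ : FeasibleFlow A α ρ)
    (hA : ∀ i j, 0 ≤ A i j) (hn : 0 < n) (x : HotsSpace n) (l : Fin (n + 1)) (d : ℝ) :
    expGapDeriv (arcWeight A) (arcFlow A ρ)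
        (arcTension A (x + (Pi.single l (coordIncrement A x l), 0)))
        (arcTension A (Pi.single l d, 0)) =
      -(hotsFlow A x l l *
        (Real.exp (coordIncrement A x l) - Real.exp (-coordIncrement A x l))) * d := by
  rw [hρ.expGapDeriv_eq hA, Fintype.sum_eq_single l fun i hi => by
    simp only [Pi.single_eq_of_ne hi, mul_zero]]
  simp only [Pi.single_eq_same, sum_hotsFlow_sub_sum_hotsFlow_coordIncrement hA hn, Prod.fst_zero,
    Prod.snd_zero, mul_zero, add_zero, sub_zero]

theorem sigmaP_pos (hA : ∀ i j, 0 ≤ A i j) (hA0 : A ≠ 0) (p : Fin (n + 1) → ℝ) :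
    0 < sigmaP A p := by
  obtain ⟨i, j, hij⟩ := exists_entry_pos hA hA0
  have hterm (i j : Fin n) : 0 ≤ A i j * Real.exp (p i.castSucc - p j.castSucc) :=
    mul_nonneg (hA i j) (Real.exp_nonneg _)
  exact Finset.sum_pos' (fun i _ => Finset.sum_nonneg fun j _ => hterm i j)
    ⟨i, Finset.mem_univ i, Finset.sum_pos' (fun j _ => hterm i j)
      ⟨j, Finset.mem_univ j, mul_pos hij (Real.exp_pos _)⟩⟩

theorem sum_hotsFlow_last_left (A : Matrix (Fin n) (Fin n) ℝ) (x : HotsSpace n) :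
    ∑ j, hotsFlow A x (Fin.last n) j =
      (∑ j : Fin n, Real.exp (x.1 (Fin.last n) - x.1 j.castSucc)) * Real.exp x.2.2.1
        * Real.exp x.2.1 := by
  simp only [Fin.sum_univ_castSucc, hotsFlow_last_castSucc, hotsFlow_last_last, add_zero,
    Finset.sum_mul, ← Real.exp_add]
  congr! 2
  ring

theorem sum_hotsFlow_last_right (A : Matrix (Fin n) (Fin n) ℝ) (x : HotsSpace n) :
    ∑ i, hotsFlow A x i (Fin.last n) =
      (∑ i : Fin n, Real.exp (x.1 i.castSucc - x.1 (Fin.last n))) * Real.exp (-x.2.2.2)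
        * Real.exp x.2.1 := by
  simp only [Fin.sum_univ_castSucc, hotsFlow_castSucc_last, hotsFlow_last_last, add_zero,
    Finset.sum_mul, ← Real.exp_add]
  congr! 2
  ring

theorem sum_hotsFlow_eq (A : Matrix (Fin n) (Fin n) ℝ) (x : HotsSpace n) :
    ∑ i, ∑ j, hotsFlow A x i j =
      sigmaP A x.1 * Real.exp x.2.1 + ∑ i, hotsFlow A x i (Fin.last n)
        + ∑ j, hotsFlow A x (Fin.last n) j := by
  simp only [Fin.sum_univ_castSucc, Finset.sum_add_distrib, hotsFlow_castSucc_castSucc,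
    hotsFlow_last_last, add_zero, sigmaP, Finset.sum_mul, Real.exp_add, mul_assoc]
  ring

section LamOpt

variable (hA : ∀ i j, 0 ≤ A i j) (hA0 : A ≠ 0) (hα₁ : 1 / 2 < α) (p : Fin (n + 1) → ℝ)

include hA hA0 hα₁

theorem sigmaP_mul_exp_lamOpt : sigmaP A p * Real.exp (lamOpt A α p).1 = 2 * α - 1 := by
  have hσ := sigmaP_pos hA hA0 p
  rw [lamOpt, Real.exp_log (div_pos (by linarith) hσ), mul_div_cancel₀ _ hσ.ne']

theorem gamma_mul_sigmaP_mul_exp_lamOpt :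
    (1 - α) / (2 * α - 1) * sigmaP A p * Real.exp (lamOpt A α p).1 = 1 - α := by
  rw [mul_assoc, sigmaP_mul_exp_lamOpt hA hA0 hα₁, div_mul_cancel₀ _ (by linarith)]

variable (hα₂ : α < 1)

include hα₂

theorem gamma_mul_sigmaP_pos : 0 < (1 - α) / (2 * α - 1) * sigmaP A p :=
  mul_pos (div_pos (by linarith) (by linarith)) (sigmaP_pos hA hA0 p)

theorem sum_hotsFlow_lamOpt_last_left :
    ∑ j, hotsFlow A (p, lamOpt A α p) (Fin.last n) j = 1 - α := by
  obtain ⟨i, -, -⟩ := exists_entry_pos hA hA0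
  have hS : 0 < ∑ j : Fin n, Real.exp (p (Fin.last n) - p j.castSucc) :=
    Finset.sum_pos (fun _ _ => Real.exp_pos _) ⟨i, Finset.mem_univ i⟩
  have ha : (∑ j : Fin n, Real.exp (p (Fin.last n) - p j.castSucc))
      * Real.exp (lamOpt A α p).2.1 = (1 - α) / (2 * α - 1) * sigmaP A p := by
    rw [lamOpt, Real.exp_log (div_pos (gamma_mul_sigmaP_pos hA hA0 hα₁ p hα₂) hS),
      mul_div_cancel₀ _ hS.ne']
  rw [sum_hotsFlow_last_left, ha, gamma_mul_sigmaP_mul_exp_lamOpt hA hA0 hα₁ p]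

theorem sum_hotsFlow_lamOpt_last_right :
    ∑ i, hotsFlow A (p, lamOpt A α p) i (Fin.last n) = 1 - α := by
  obtain ⟨i, -, -⟩ := exists_entry_pos hA hA0
  have hS : 0 < ∑ i : Fin n, Real.exp (p i.castSucc - p (Fin.last n)) :=
    Finset.sum_pos (fun _ _ => Real.exp_pos _) ⟨i, Finset.mem_univ i⟩
  have hb : (∑ i : Fin n, Real.exp (p i.castSucc - p (Fin.last n)))
      * Real.exp (-(lamOpt A α p).2.2) = (1 - α) / (2 * α - 1) * sigmaP A p := by
    rw [lamOpt, neg_neg, Real.exp_log (div_pos (gamma_mul_sigmaP_pos hA hA0 hα₁ p hα₂) hS),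
      mul_div_cancel₀ _ hS.ne']
  rw [sum_hotsFlow_last_right, hb, gamma_mul_sigmaP_mul_exp_lamOpt hA hA0 hα₁ p]

theorem FeasibleFlow.expGapDeriv_lamOpt_eq_zero (hρ : FeasibleFlow A α ρ) {h : HotsSpace n}
    (hh : h.1 = 0) :
    expGapDeriv (arcWeight A) (arcFlow A ρ) (arcTension A (p, lamOpt A α p)) (arcTension A h) =
      0 := by
  rw [hρ.expGapDeriv_eq hA, sum_hotsFlow_eq, sigmaP_mul_exp_lamOpt hA hA0 hα₁,
    sum_hotsFlow_lamOpt_last_left hA hA0 hα₁ p hα₂,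
    sum_hotsFlow_lamOpt_last_right hA hA0 hα₁ p hα₂, hh]
  simp only [Pi.zero_apply, mul_zero, Finset.sum_const_zero]
  ring

end LamOpt

end Steps

section Descent

variable {n : ℕ} {A : Matrix (Fin n) (Fin n) ℝ} {α : ℝ}
  {ρ : Matrix (Fin (n + 1)) (Fin (n + 1)) ℝ}

theorem exp_sub_exp_neg_mul_self_nonneg (δ : ℝ) : 0 ≤ (Real.exp δ - Real.exp (-δ)) * δ := by
  rcases le_total 0 δ with hδ | hδ
  · exact mul_nonneg (sub_nonneg.2 (Real.exp_le_exp.2 (by linarith))) hδ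
  · exact mul_nonneg_of_nonpos_of_nonpos (sub_nonpos.2 (Real.exp_le_exp.2 (by linarith))) hδ

theorem abs_exp_sub_exp_neg_le (δ : ℝ) :
    |Real.exp δ - Real.exp (-δ)| ≤ 2 * Real.exp |δ| * |δ| := by
  calc |Real.exp δ - Real.exp (-δ)| ≤ Real.exp |δ| * |δ - -δ| :=
        abs_exp_sub_exp_le (le_abs_self δ) (neg_le_abs δ)
    _ = 2 * Real.exp |δ| * |δ| := by
        rw [sub_neg_eq_add, ← two_mul, abs_mul, abs_two]
        ring

theorem hotsFlow_self_le (hA : ∀ i j, 0 ≤ A i j) (x : HotsSpace n) (l : Fin (n + 1)) :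
    hotsFlow A x l l ≤ (∑ i, augMatrix A i i) * Real.exp ‖arcTension A x‖ :=
  (hotsFlow_le hA x l l).trans (mul_le_mul_of_nonneg_right
    (Finset.single_le_sum (f := fun i => augMatrix A i i)
      (fun i _ => augMatrix_nonneg hA i i) (Finset.mem_univ l)) (Real.exp_nonneg _))

theorem FeasibleFlow.expGapDeriv_coordIncrement_nonpos (hρ : FeasibleFlow A α ρ)
    (hA : ∀ i j, 0 ≤ A i j) (hn : 0 < n) (x : HotsSpace n) (l : Fin (n + 1)) :
    expGapDeriv (arcWeight A) (arcFlow A ρ)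
        (arcTension A (x + (Pi.single l (coordIncrement A x l), 0)))
        (arcTension A (Pi.single l (coordIncrement A x l), 0)) ≤ 0 := by
  rw [hρ.expGapDeriv_single_coordIncrement hA hn, neg_mul, mul_assoc]
  exact neg_nonpos.2
    (mul_nonneg (hotsFlow_nonneg hA x l l) (exp_sub_exp_neg_mul_self_nonneg _))

theorem FeasibleFlow.abs_expGapDeriv_coordIncrement_le (hρ : FeasibleFlow A α ρ)
    (hA : ∀ i j, 0 ≤ A i j) (hn : 0 < n) {x x' : HotsSpace n} {l : Fin (n + 1)}
    (hx' : x' = x + (Pi.single l (coordIncrement A x l), 0)) {R : ℝ}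
    (hR : ‖arcTension A x‖ ≤ R) (hR' : ‖arcTension A x'‖ ≤ R) (d : ℝ) :
    |expGapDeriv (arcWeight A) (arcFlow A ρ) (arcTension A x') (arcTension A (Pi.single l d, 0))| ≤
      (∑ i, augMatrix A i i) * Real.exp R * (2 * Real.exp (2 * R))
        * dist (arcTension A x) (arcTension A x') * ‖arcTension A (Pi.single l d, 0)‖ := by
  have hδ : |coordIncrement A x l| ≤ dist (arcTension A x) (arcTension A x') := by
    rw [hx', map_add, dist_self_add_right]
    exact abs_le_norm_arcTension_single A hn l _
  have hdist : dist (arcTension A x) (arcTension A x') ≤ 2 * R := by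
    rw [dist_eq_norm]
    exact (norm_sub_le _ _).trans (by linarith)
  have hloop : hotsFlow A x l l ≤ (∑ i, augMatrix A i i) * Real.exp R :=
    (hotsFlow_self_le hA x l).trans (mul_le_mul_of_nonneg_left (Real.exp_le_exp.2 hR)
      (Finset.sum_nonneg fun i _ => augMatrix_nonneg hA i i))
  have hexp : |Real.exp (coordIncrement A x l) - Real.exp (-coordIncrement A x l)| ≤
      2 * Real.exp (2 * R) * dist (arcTension A x) (arcTension A x') := by
    refine (abs_exp_sub_exp_neg_le _).trans ?_
    gcongr
    exact hδ.trans hdist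
  calc |expGapDeriv (arcWeight A) (arcFlow A ρ) (arcTension A x')
          (arcTension A (Pi.single l d, 0))|
      = hotsFlow A x l l
          * |Real.exp (coordIncrement A x l) - Real.exp (-coordIncrement A x l)| * |d| := by
        rw [hx', hρ.expGapDeriv_single_coordIncrement hA hn, abs_mul, abs_neg, abs_mul,
          abs_of_nonneg (hotsFlow_nonneg hA x l l)]
    _ ≤ (∑ i, augMatrix A i i) * Real.exp R
          * (2 * Real.exp (2 * R) * dist (arcTension A x) (arcTension A x'))
          * ‖arcTension A (Pi.single l d, 0)‖ := by
        gcongr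
        · exact mul_nonneg ((hotsFlow_nonneg hA x l l).trans hloop) (by positivity)
        · exact (hotsFlow_nonneg hA x l l).trans hloop
        · exact abs_le_norm_arcTension_single A hn l d
    _ = _ := by ring

/-- A sequence produced by the cyclic updates of the coordinates of `p` and of the multipliers. -/
def IsHotsDescent (A : Matrix (Fin n) (Fin n) ℝ) (α : ℝ) (x : ℕ → HotsSpace n) : Prop :=
  ∀ k, (∀ l, cyclicBlock n k = some l →
      x (k + 1) = x k + (Pi.single l (coordIncrement A (x k) l), 0)) ∧
    (cyclicBlock n k = none → x (k + 1) = ((x k).1, lamOpt A α (x k).1))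

theorem FeasibleFlow.isBlockDescent (hρ : FeasibleFlow A α ρ) (hA : ∀ i j, 0 ≤ A i j)
    (hA0 : A ≠ 0) (hα₁ : 1 / 2 < α) (hα₂ : α < 1) {x : ℕ → HotsSpace n}
    (hx : IsHotsDescent A α x) :
    IsBlockDescent (expGapDeriv (arcWeight A) (arcFlow A ρ)) (arcTension A) (hotsBlock n)
      (cyclicBlock n) x where
  sub_mem k := by
    cases hk : cyclicBlock n k with
    | some l =>
      rw [(hx k).1 l hk, add_sub_cancel_left]
      exact mem_hotsBlock_some.2 ⟨_, rfl⟩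
    | none =>
      rw [(hx k).2 hk]
      exact mem_hotsBlock_none.2 (sub_self _)
  apply_step_nonpos k := by
    obtain ⟨i, -, -⟩ := exists_entry_pos hA hA0
    rw [← map_sub]
    cases hk : cyclicBlock n k with
    | some l =>
      rw [(hx k).1 l hk, add_sub_cancel_left]
      exact hρ.expGapDeriv_coordIncrement_nonpos hA i.pos (x k) l
    | none =>
      rw [(hx k).2 hk]
      exact (hρ.expGapDeriv_lamOpt_eq_zero hA hA0 hα₁ _ hα₂ (sub_self _)).le
  exists_abs_apply_le R := by
    obtain ⟨i, -, -⟩ := exists_entry_pos hA hA0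
    have hloops : 0 ≤ ∑ i, augMatrix A i i := Finset.sum_nonneg fun i _ => augMatrix_nonneg hA i i
    refine ⟨⟨(∑ i, augMatrix A i i) * Real.exp R * (2 * Real.exp (2 * R)), by positivity⟩,
      fun k hR hR' h hh => ?_⟩
    cases hk : cyclicBlock n k with
    | some l =>
      obtain ⟨d, rfl⟩ := mem_hotsBlock_some.1 (hk ▸ hh)
      exact hρ.abs_expGapDeriv_coordIncrement_le hA i.pos ((hx k).1 l hk) hR hR' d
    | none =>
      rw [(hx k).2 hk, hρ.expGapDeriv_lamOpt_eq_zero hA hA0 hα₁ _ hα₂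
        (mem_hotsBlock_none.1 (hk ▸ hh)), abs_zero]
      exact mul_nonneg (mul_nonneg (NNReal.coe_nonneg _) dist_nonneg) (norm_nonneg _)

theorem add_single_coordIncrement (A : Matrix (Fin n) (Fin n) ℝ) (x : HotsSpace n)
    (l : Fin (n + 1)) :
    x + (Pi.single l (coordIncrement A x l), 0) =
      (Function.update x.1 l (coordUpdate A x.2.2.1 x.2.2.2 x.1 l), x.2) := by
  refine Prod.ext (funext fun i => ?_) (add_zero _)
  rcases eq_or_ne i l with rfl | hil
  · simp [coordIncrement]
  · simp [hil]

theorem isHotsDescent_of_update {p : ℕ → Fin (n + 1) → ℝ} {m : ℕ → ℝ × ℝ × ℝ}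
    (hstep : ∀ k : ℕ,
      (∀ h : k % (n + 2) < n + 1,
        p (k + 1) = Function.update (p k) ⟨k % (n + 2), h⟩
          (coordUpdate A (m k).2.1 (m k).2.2 (p k) ⟨k % (n + 2), h⟩) ∧
        m (k + 1) = m k) ∧
      (k % (n + 2) = n + 1 →
        p (k + 1) = p k ∧ m (k + 1) = lamOpt A α (p k))) :
    IsHotsDescent A α fun k => (p k, m k) := fun k => by
  rcases (Nat.le_of_lt_succ (Nat.mod_lt k (n + 1).succ_pos)).lt_or_eq with hlt | heq
  · obtain ⟨hp, hm⟩ := (hstep k).1 hlt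
    refine ⟨fun l hl => ?_, fun hnone => by simp [cyclicBlock_eq_some hlt] at hnone⟩
    obtain rfl : _ = l := Option.some.inj ((cyclicBlock_eq_some hlt).symm.trans hl)
    exact (Prod.ext hp hm).trans (add_single_coordIncrement A (p k, m k) _).symm
  · obtain ⟨hp, hm⟩ := (hstep k).2 heq
    simp only [cyclicBlock_eq_none heq, reduceCtorEq, false_imp_iff, implies_true, hp, hm, and_self]

end Descent

/-- Exact cyclic coordinate descent for the effective HOTS dual: the `n+1` coordinates of `p`
and then the block of multipliers `(μ, a, b)` are updated cyclically, each update being the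
exact minimization of `θ` over the corresponding coordinate(s). If a feasible flow with the
pattern of `A'` exists, the iterates converge at least linearly to a global minimizer of `θ`. -/
theorem effHots_coordinate_descent_converges {n : ℕ} (A : Matrix (Fin n) (Fin n) ℝ)
    (hA : ∀ i j, 0 ≤ A i j) (hA0 : A ≠ 0) (α : ℝ) (hα₁ : 1 / 2 < α) (hα₂ : α < 1)
    (hfeas : ∃ ρ : Matrix (Fin (n + 1)) (Fin (n + 1)) ℝ, FeasibleFlow A α ρ)
    (p : ℕ → Fin (n + 1) → ℝ) (m : ℕ → ℝ × ℝ × ℝ)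
    (hstep : ∀ k : ℕ,
      (∀ h : k % (n + 2) < n + 1,
        p (k + 1) = Function.update (p k) ⟨k % (n + 2), h⟩
          (coordUpdate A (m k).2.1 (m k).2.2 (p k) ⟨k % (n + 2), h⟩) ∧
        m (k + 1) = m k) ∧
      (k % (n + 2) = n + 1 →
        p (k + 1) = p k ∧ m (k + 1) = lamOpt A α (p k))) :
    ∃ (pbar : Fin (n + 1) → ℝ) (mbar : ℝ × ℝ × ℝ),
      (∀ (q : Fin (n + 1) → ℝ) (μ a b : ℝ),
        effDual A α pbar mbar.1 mbar.2.1 mbar.2.2 ≤ effDual A α q μ a b) ∧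
      Tendsto (fun k => (p k, m k)) atTop (nhds (pbar, mbar)) ∧
      ∃ C ρ : ℝ, 0 ≤ ρ ∧ ρ < 1 ∧
        ∀ k, dist (p k, m k) (pbar, mbar) ≤ C * ρ ^ k := by
  obtain ⟨ρ, hρ⟩ := hfeas
  have hweight (e : Arc A) : 0 < arcWeight A e := e.2
  have hflow (e : Arc A) : 0 < arcFlow A ρ e := hρ.1 _ _ e.2
  have hdescent := hρ.isBlockDescent hA hA0 hα₁ hα₂ (isHotsDescent_of_update hstep)
  obtain ⟨⟨pbar, mbar⟩, hmin, hconv⟩ := hdescent.exists_minimizer_convergesLinearlyTo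
    (iSup_hotsBlock n) (disjoint_hotsBlock_ker_arcTension hA hA0) exists_lt_cyclicBlock_add_eq
    (continuous_expGap _ _) (expGap_coercive hweight hflow)
    (exists_stronglyConvexSmoothOn_expGap hweight (arcFlow A ρ))
  refine ⟨pbar, mbar, fun q μ a b => ?_, hconv.tendsto, hconv⟩
  simpa only [← hρ.effDual_eq_expGap hA] using hmin (q, μ, a, b)
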